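/- Let ℓ, ℓ′ ∈ ℂ with Re ℓ > 0 and Re ℓ′ < 0, and let U and U′ be open neighbourhoods of ℓ and ℓ′ respectively. Then the additive submonoid of ℂ/2iπℤ generated by the images of U ∪ U′ is all of ℂ/2iπℤ; equivalently, for every z ∈ ℂ there exist n ≥ 1, elements u_1, …, u_n ∈ U ∪ U′, and q ∈ ℤ such that z = u_1 + ⋯ + u_n + 2iπq. -/

import Mathlib

open Complex

/-!
Summing `n` points of a ball of radius `r` reaches a whole ball of radius `n * r`, so it suffices to
approximate `z` within a *fixed* distance by `n * l + m * l' + 2 * π * I * q` with `n` arbitrarily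
large. The opposite signs of `l.re` and `l'.re` allow this for the real part: overshoot with `n`
copies of `l`, then step back with copies of `l'`. The multiple of `2 * π * I` then takes care of
the imaginary part.
-/

theorem exists_mem_ball_sum_eq {ι E : Type*} [Fintype ι] [SeminormedAddCommGroup E]
    [NormedSpace ℝ E] {c : ι → E} {r : ℝ} {x : E}
    (hx : x ∈ Metric.ball (∑ i, c i) (Fintype.card ι * r)) :
    ∃ u : ι → E, (∀ i, u i ∈ Metric.ball (c i) r) ∧ ∑ i, u i = x := by
  rw [mem_ball_iff_norm] at hx
  have card_ne_zero : (Fintype.card ι : ℝ) ≠ 0 :=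
    left_ne_zero_of_mul ((norm_nonneg _).trans_lt hx).ne'
  have card_pos : (0 : ℝ) < Fintype.card ι := card_ne_zero.symm.lt_of_le (Nat.cast_nonneg _)
  refine ⟨fun i ↦ c i + (Fintype.card ι : ℝ)⁻¹ • (x - ∑ i, c i), fun i ↦ ?_, ?_⟩
  · rwa [mem_ball_iff_norm, add_sub_cancel_left, norm_smul, norm_inv, Real.norm_natCast,
      inv_mul_lt_iff₀ card_pos]
  · rw [Finset.sum_add_distrib, Finset.sum_const, Finset.card_univ, ← Nat.cast_smul_eq_nsmul ℝ,
      smul_inv_smul₀ card_ne_zero, add_sub_cancel]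

theorem exists_fin_sum_eq_of_ball_subset {E : Type*} [SeminormedAddCommGroup E] [NormedSpace ℝ E]
    {a b : E} {r : ℝ} {U V : Set E} (hU : Metric.ball a r ⊆ U) (hV : Metric.ball b r ⊆ V)
    {n m : ℕ} {x : E} (hx : x ∈ Metric.ball (n • a + m • b) ((n + m : ℕ) * r)) :
    ∃ u : Fin (n + m) → E, (∀ i, u i ∈ U ∪ V) ∧ ∑ i, u i = x := by
  obtain ⟨u, hu, hsum⟩ := exists_mem_ball_sum_eq (r := r) (x := x)
    (c := Fin.append (fun _ : Fin n ↦ a) fun _ : Fin m ↦ b)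
    (by simpa [Fin.sum_univ_add] using hx)
  refine ⟨u, Fin.addCases (fun i ↦ .inl (hU ?_)) (fun i ↦ .inr (hV ?_)), hsum⟩
  · simpa only [Fin.append_left] using hu (Fin.castAdd m i)
  · simpa only [Fin.append_right] using hu (Fin.natAdd n i)

theorem exists_nsmul_add_nsmul_abs_sub_lt {G : Type*} [AddCommGroup G] [LinearOrder G]
    [IsOrderedAddMonoid G] [Archimedean G] {a b : G} (ha : 0 < a) (hb : b < 0) (x : G) (N : ℕ) :
    ∃ n m : ℕ, N ≤ n ∧ |x - (n • a + m • b)| < -b := by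
  obtain ⟨k, hk⟩ := Archimedean.arch x ha
  obtain ⟨n, hNn, hkn⟩ : ∃ n, N ≤ n ∧ k ≤ n := ⟨max N k, le_max_left _ _, le_max_right _ _⟩
  have overshoot : x ≤ n • a := hk.trans (nsmul_le_nsmul_left ha.le hkn)
  obtain ⟨m, ⟨hm_le, hm_lt⟩, -⟩ := existsUnique_zsmul_near_of_pos (neg_pos.2 hb) (n • a - x)
  have hm_nonneg : 0 ≤ m := by
    have : (0 : ℤ) • -b < (m + 1) • -b := by
      simpa only [zero_zsmul] using (sub_nonneg.2 overshoot).trans_lt hm_lt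
    exact Int.lt_add_one_iff.1 ((zsmul_lt_zsmul_iff_left (neg_pos.2 hb)).1 this)
  lift m to ℕ using hm_nonneg
  have remainder : n • a - x - (m : ℤ) • -b = n • a + m • b - x := by
    rw [natCast_zsmul, smul_neg]; abel
  refine ⟨n, m, hNn, ?_⟩
  rw [abs_sub_comm, ← remainder, abs_of_nonneg (sub_nonneg.2 hm_le), sub_lt_iff_lt_add']
  rwa [add_zsmul, one_zsmul] at hm_lt

theorem exists_norm_sub_lt_of_re_pos_of_re_neg {l l' : ℂ} (hl : 0 < l.re) (hl' : l'.re < 0)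
    {p : ℝ} (hp : 0 < p) (z : ℂ) (N : ℕ) :
    ∃ n m : ℕ, N ≤ n ∧ ∃ q : ℤ, ‖z - p * I * q - (n • l + m • l')‖ < -l'.re + p := by
  obtain ⟨n, m, hNn, hre⟩ := exists_nsmul_add_nsmul_abs_sub_lt hl hl' z.re N
  obtain ⟨q, ⟨him_nonneg, him_lt⟩, -⟩ :=
    existsUnique_sub_zsmul_mem_Ico hp (z.im - (n * l.im + m * l'.im)) 0
  refine ⟨n, m, hNn, q, (norm_le_abs_re_add_abs_im _).trans_lt (add_lt_add ?_ ?_)⟩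
  · simpa using hre
  · have him : (z - p * I * q - (n • l + m • l')).im
        = z.im - (n * l.im + m * l'.im) - q • p := by
      simp [sub_right_comm, mul_comm]
    rw [him, abs_of_nonneg him_nonneg]
    rwa [zero_add] at him_lt

/-- If `U, U'` are open neighbourhoods of points `ℓ, ℓ'` with `Re ℓ > 0` and
`Re ℓ' < 0`, then the additive submonoid of `ℂ/2iπℤ` generated by `U ∪ U'` is everything:
every `z ∈ ℂ` can be written as `u_1 + ⋯ + u_n + 2iπq` with `n ≥ 1`, `u_i ∈ U ∪ U'`, `q ∈ ℤ`. -/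
theorem sums_mod_two_pi_I_eq_univ
    (l l' : ℂ) (hl : 0 < l.re) (hl' : l'.re < 0)
    (U U' : Set ℂ) (hU : IsOpen U) (hU' : IsOpen U') (hlU : l ∈ U) (hl'U' : l' ∈ U') :
    ∀ z : ℂ, ∃ n : ℕ, 1 ≤ n ∧ ∃ u : Fin n → ℂ, (∀ i, u i ∈ U ∪ U') ∧
      ∃ q : ℤ, z = (∑ i, u i) + 2 * Real.pi * Complex.I * q := by
  intro z
  obtain ⟨r, hr, hrU, hrU'⟩ : ∃ r > 0, Metric.ball l r ⊆ U ∧ Metric.ball l' r ⊆ U' := by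
    obtain ⟨s, hs, hsU⟩ := Metric.isOpen_iff.1 hU l hlU
    obtain ⟨t, ht, htU'⟩ := Metric.isOpen_iff.1 hU' l' hl'U'
    exact ⟨min s t, lt_min hs ht, (Metric.ball_subset_ball (min_le_left s t)).trans hsU,
      (Metric.ball_subset_ball (min_le_right s t)).trans htU'⟩
  obtain ⟨N, hN⟩ := exists_nat_gt ((-l'.re + 2 * Real.pi) / r)
  obtain ⟨n, m, hNn, q, hq⟩ :=
    exists_norm_sub_lt_of_re_pos_of_re_neg hl hl' Real.two_pi_pos z (max N 1)
  have bound_lt : -l'.re + 2 * Real.pi < (n + m : ℕ) * r :=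
    (div_lt_iff₀ hr).1 (hN.trans_le (mod_cast (le_of_max_le_left hNn).trans (n.le_add_right m)))
  obtain ⟨u, hu, hsum⟩ := exists_fin_sum_eq_of_ball_subset hrU hrU'
    (mem_ball_iff_norm.2 (hq.trans bound_lt))
  refine ⟨n + m, le_add_right (le_of_max_le_right hNn), u, hu, q, ?_⟩
  rw [hsum]
  push_cast
  ring
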